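/- arXiv:1612.08698 — 2 statements merged into one kernel-verified Lean document; each statement's English description precedes it below -/
import Mathlib

section
/- Every graph of maximum average degree less than d + 1 + 2/(d+4) is weakly d-degenerate, where d ≥ 0 is an integer. -/
/-- The maximum average degree of `G` is less than `x`: every non-null subgraph `H`
satisfies `2|E(H)| < x·|V(H)|`. -/
def MadLT {V : Type*} (G : SimpleGraph V) (x : ℝ) : Prop :=
  ∀ H : G.Subgraph, H.verts.Nonempty → 2 * (H.edgeSet.ncard : ℝ) < x * H.verts.ncard

/-- `G` is weakly `d`-degenerate: every subgraph `G'` (with at least one vertex) either has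
minimum degree at most `d`, or contains a set of `d+1` vertices of degree `d+1` (in `G'`)
inducing a connected subgraph. -/
def WeaklyDegenerate {V : Type*} (G : SimpleGraph V) (d : ℕ) : Prop :=
  ∀ H : G.Subgraph, H.verts.Nonempty →
    (∃ v ∈ H.verts, (H.neighborSet v).ncard ≤ d) ∨
    (∃ P : Finset V, ↑P ⊆ H.verts ∧ P.card = d + 1 ∧
      (∀ v ∈ P, (H.neighborSet v).ncard = d + 1) ∧ (H.induce ↑P).Connected)

/-!
Suppose every vertex of a graph has degree at least `k`, and call a vertex low if its degree is
exactly `k`. If every low vertex has at least `m` neighbours that are not low, then double counting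
the edges between the two classes shows that the high vertices have enough total degree to raise
the average degree to `k + m / (k + m + 1)`.

For `k = d + 1` and `m = 2` this means that a graph of minimum degree greater than `d` and average
degree less than `d + 1 + 2 / (d + 4)` has a low vertex with at least `d` low neighbours. Together
with any `d` of them it forms a star, which is the required connected set.
-/

open Finset

section AverageDegree

variable {V : Type*} [Fintype V] {G : SimpleGraph V} [DecidableRel G.Adj] {k m : ℕ}

theorem card_mul_le_sum_degree_of_le_card_neighborFinset_filter {s : Finset V} {p : V → Prop}
    [DecidablePred p] (h : ∀ v ∈ s, m ≤ #{u ∈ G.neighborFinset v | p u}) :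
    #s * m ≤ ∑ u with p u, G.degree u := by
  calc #s * m
    _ ≤ ∑ v ∈ s, #{u ∈ G.neighborFinset v | p u} := by
        simpa only [smul_eq_mul] using card_nsmul_le_sum s _ m h
    _ = ∑ v ∈ s, #(bipartiteAbove G.Adj {u | p u} v) := by
        refine sum_congr rfl fun v _ ↦ congrArg card ?_
        ext u
        simp [bipartiteAbove, and_comm]
    _ = ∑ u with p u, #(bipartiteBelow G.Adj s u) :=
        sum_card_bipartiteAbove_eq_sum_card_bipartiteBelow _
    _ ≤ ∑ u with p u, G.degree u := by
        refine sum_le_sum fun u _ ↦ card_le_card fun v hv ↦ ?_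
        exact (G.mem_neighborFinset u v).2 (mem_filter.1 hv).2.symm

theorem mul_card_le_two_mul_card_edgeFinset_mul (hk : ∀ v, k ≤ G.degree v)
    (hm : ∀ v, G.degree v = k → m ≤ #{u ∈ G.neighborFinset v | G.degree u ≠ k}) :
    (k * (k + m + 1) + m) * Fintype.card V ≤ 2 * #G.edgeFinset * (k + m + 1) := by
  let low : Finset V := {v | G.degree v = k}
  let high : Finset V := {v | G.degree v ≠ k}
  let highDegree := ∑ v ∈ high, G.degree v
  have card_add : #low + #high = Fintype.card V := card_filter_add_card_filter_not _
  have sum_low : ∑ v ∈ low, G.degree v = #low * k :=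
    sum_const_nat fun v hv ↦ (mem_filter.1 hv).2
  have sum_add : #low * k + highDegree = 2 * #G.edgeFinset := by
    rw [← sum_low, sum_filter_add_sum_filter_not]
    exact G.sum_degrees_eq_twice_card_edges
  have high_le : #high * (k + 1) ≤ highDegree := by
    simpa only [smul_eq_mul] using card_nsmul_le_sum high _ (k + 1) fun v hv ↦
      (hk v).lt_of_ne' (mem_filter.1 hv).2
  have low_le : #low * m ≤ highDegree :=
    card_mul_le_sum_degree_of_le_card_neighborFinset_filter fun v hv ↦ hm v (mem_filter.1 hv).2
  -- Adding `low_le` to `k + m` times `high_le` makes the coefficients of `#low` and `#high` agree,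
  -- since `k * (k + m + 1) + m = (k + m) * (k + 1)`.
  calc (k * (k + m + 1) + m) * Fintype.card V
    _ = #low * k * (k + m + 1) + (#low * m + #high * (k + 1) * (k + m)) := by
        rw [← card_add]; ring
    _ ≤ #low * k * (k + m + 1) + (highDegree + highDegree * (k + m)) := by gcongr
    _ = 2 * #G.edgeFinset * (k + m + 1) := by rw [← sum_add]; ring

theorem add_div_mul_card_le_two_mul_card_edgeFinset (hk : ∀ v, k ≤ G.degree v)
    (hm : ∀ v, G.degree v = k → m ≤ #{u ∈ G.neighborFinset v | G.degree u ≠ k}) :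
    (k + m / (k + m + 1) : ℝ) * Fintype.card V ≤ 2 * #G.edgeFinset := by
  have pos : (0 : ℝ) < k + m + 1 := by positivity
  have common_denom : (k + m / (k + m + 1) : ℝ) * Fintype.card V
      = (k * (k + m + 1) + m) * Fintype.card V / (k + m + 1) := by field_simp
  rw [common_denom, div_le_iff₀ pos]
  exact_mod_cast mul_card_le_two_mul_card_edgeFinset_mul hk hm

theorem exists_degree_lt_or_lt_card_neighborFinset_filter_add
    (h : 2 * (#G.edgeFinset : ℝ) < (k + m / (k + m + 1)) * Fintype.card V) :
    (∃ v, G.degree v < k) ∨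
      ∃ v, G.degree v = k ∧ k < #{u ∈ G.neighborFinset v | G.degree u = k} + m := by
  by_contra! ⟨hk, hlow⟩
  refine h.not_ge (add_div_mul_card_le_two_mul_card_edgeFinset hk fun v hv ↦ ?_)
  have split : #{u ∈ G.neighborFinset v | G.degree u = k}
      + #{u ∈ G.neighborFinset v | G.degree u ≠ k} = G.degree v :=
    card_filter_add_card_filter_not _
  have := hlow v hv
  lia

end AverageDegree

section Subgraph

variable {V : Type*} {G : SimpleGraph V} {H : G.Subgraph}

theorem ncard_neighborSet_eq_coe_degree (v : H.verts) [Fintype (H.coe.neighborSet v)] :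
    (H.neighborSet v).ncard = H.coe.degree v := by
  rw [← Nat.card_coe_set_eq, ← Nat.card_congr (SimpleGraph.Subgraph.coeNeighborSetEquiv v),
    Nat.card_eq_fintype_card, SimpleGraph.card_neighborSet_eq_degree]

theorem ncard_edgeSet_eq_card_coe_edgeFinset [Fintype H.coe.edgeSet] :
    H.edgeSet.ncard = #H.coe.edgeFinset := by
  rw [← H.image_coe_edgeSet_coe,
    Set.ncard_image_of_injective _ (Sym2.map.injective Subtype.val_injective),
    ← SimpleGraph.coe_edgeFinset, Set.ncard_coe_finset]

theorem connected_induce_insert_of_subset_neighborSet {v : V} {s : Set V}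
    (hs : s ⊆ H.neighborSet v) : (H.induce (insert v s)).Connected := by
  rw [SimpleGraph.Subgraph.connected_iff', SimpleGraph.connected_iff_exists_forall_reachable]
  refine ⟨⟨v, s.mem_insert v⟩, ?_⟩
  rintro ⟨u, rfl | hu⟩
  · exact .rfl
  · exact SimpleGraph.Adj.reachable (by simpa [hu] using hs hu)

theorem exists_connected_induce_of_forall_mem_adj {v : H.verts} {T : Finset H.verts}
    {p : H.verts → Prop} (hv : p v) (hT : ∀ u ∈ T, H.Adj v u ∧ p u) :
    ∃ P : Finset V, #P = #T + 1 ∧ (∀ u ∈ P, ∃ hu : u ∈ H.verts, p ⟨u, hu⟩) ∧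
      (H.induce ↑P).Connected := by
  classical
  have v_notMem : v ∉ T := fun h ↦ (hT v h).1.ne rfl
  refine ⟨(insert v T).map (.subtype (· ∈ H.verts)), ?_, ?_, ?_⟩
  · rw [card_map, card_insert_of_notMem v_notMem]
  · simp only [forall_mem_map, forall_mem_insert]
    exact ⟨⟨v.2, hv⟩, fun u hu ↦ ⟨u.2, (hT u hu).2⟩⟩
  · rw [map_insert, coe_insert]
    refine connected_induce_insert_of_subset_neighborSet fun u hu ↦ ?_
    obtain ⟨w, hw, rfl⟩ := mem_map.1 hu
    exact (hT w hw).1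

end Subgraph

theorem stmt13 {V : Type*} [Fintype V] (d : ℕ) (G : SimpleGraph V)
    (h : MadLT G (d + 1 + 2 / (d + 4))) : WeaklyDegenerate G d := by
  classical
  intro H hne
  have avg : 2 * (#H.coe.edgeFinset : ℝ) <
      ((d + 1 : ℕ) + (2 : ℕ) / ((d + 1 : ℕ) + (2 : ℕ) + 1)) * Fintype.card H.verts := by
    convert h H hne using 2
    · rw [ncard_edgeSet_eq_card_coe_edgeFinset]
    · push_cast
      ring
    · rw [← Nat.card_coe_set_eq, Nat.card_eq_fintype_card]
  have low_or_star := exists_degree_lt_or_lt_card_neighborFinset_filter_add avg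
  simp only [← ncard_neighborSet_eq_coe_degree] at low_or_star
  rcases low_or_star with ⟨v, hv⟩ | ⟨v, hv, hcard⟩
  · exact .inl ⟨v, v.2, Nat.lt_succ_iff.1 hv⟩
  · obtain ⟨T, hT, T_card⟩ := exists_subset_card_eq (Nat.le_of_add_le_add_right (b := 2) hcard)
    obtain ⟨P, P_card, hP, P_conn⟩ :=
      exists_connected_induce_of_forall_mem_adj hv fun u hu ↦ by simpa using hT hu
    exact .inr ⟨P, fun u hu ↦ (hP u hu).1, T_card ▸ P_card, fun u hu ↦ (hP u hu).2, P_conn⟩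
end

section
/- Let d ≥ 2 be an integer such that d+1 is prime. Let G be a finite graph on vertices v_1, …, v_n with n ≥ d, such that {v_1,…,v_d} is a clique in G and for every i > d the vertex v_i has exactly d neighbors among {v_j : j < i}, and all edges of G are of this form. Let p_G = Π_{v_i v_j ∈ E(G), i < j} (x_j − x_i) be the graph polynomial of G viewed as a polynomial over the integers in variables x_1,…,x_n. Let r : {1,…,n} → Z≥0 satisfy Σ_{i=1}^n r(i) = d. For a permutation σ of {1,…,d}, let c_G(h,σ) be the coefficient in p_G of the monomial Π_{i=1}^d x_i^{σ(i)−r(i)} · Π_{i=d+1}^n x_i^{d−r(i)} (interpreted as 0 if any exponent is negative). Then Σ_{σ ∈ S_d} sgn(σ)·c_G(h,σ) ≡ −1 (mod d+1). -/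
/-!
Write `q = d + 1` and work over a field with `q` elements. Multiplying `p_G` by the monomial of
exponent `r` and by `∏_{i < j ≤ d} (x_i - x_j)` turns the signed sum into the single coefficient of
`∏ x_i ^ d`. In degree at most `n * d`, that coefficient is, up to sign, the sum of the values of
the polynomial over all points. The other two factors are invariant under translation along the
all-ones vector, and a monic polynomial of degree `q - 1` in one variable has values summing to
`-1`; summing along such lines first shows that the coefficient depends on `r` only through its sum
`d`.

One may therefore put all of `r` on the last vertex `x_n`. Then only the `x_n`-free part of the last
block of edges contributes; it is `(-1) ^ d = 1` times the product of the neighbours of `x_n`, so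
the last vertex disappears and `r` becomes the indicator of its neighbours. When only the clique is
left, take `r` to be its indicator: the coefficient comes from a product of two Vandermonde
determinants and equals `d !`.
-/

open Finset MvPolynomial Equiv.Perm

open scoped Nat

section FiniteFieldSums

variable {K : Type*} [Field K] [Fintype K] {d : ℕ} (hK : Fintype.card K = d + 1)
include hK

lemma pos_of_card_eq_succ : 0 < d := by
  have := Fintype.one_lt_card (α := K)
  lia

lemma pow_eq_one_of_card_eq_succ {a : K} (ha : a ≠ 0) : a ^ d = 1 := by
  simpa [hK] using FiniteField.pow_card_sub_one_eq_one a ha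

lemma pow_eq_one_sub_ite [DecidableEq K] (a : K) : a ^ d = 1 - if a = 0 then 1 else 0 := by
  have hd := pos_of_card_eq_succ hK
  split_ifs with h
  · simp [h, hd.ne']
  · simp [pow_eq_one_of_card_eq_succ hK h]

lemma sum_pow_eq_zero_of_lt {k : ℕ} (hk : k < d) : ∑ a : K, a ^ k = 0 :=
  FiniteField.sum_pow_lt_card_sub_one K k (by simpa [hK] using hk)

lemma sum_pow_eq_neg_one : ∑ a : K, a ^ d = -1 := by
  classical
  have hcard : (d : K) + 1 = 0 := by exact_mod_cast hK ▸ FiniteField.cast_card_eq_zero K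
  simp [pow_eq_one_sub_ite hK, hK, hcard]

lemma sum_eval_eq_neg_one_of_monic {q : Polynomial K} (hq : q.Monic) (hdeg : q.natDegree = d) :
    ∑ a : K, q.eval a = -1 := by
  have hlead : q.coeff d = 1 := hdeg ▸ hq.coeff_natDegree
  simp only [Polynomial.eval_eq_sum_range, hdeg]
  rw [sum_comm, sum_range_succ, sum_eq_zero, ← mul_sum, sum_pow_eq_neg_one hK, hlead]
  · simp
  · intro k hk
    rw [← mul_sum, sum_pow_eq_zero_of_lt hK (mem_range.1 hk), mul_zero]

end FiniteFieldSums

section ConstExponent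

/-- The exponent of the monomial `∏ v, x_v ^ d`. -/
noncomputable def constExponent (V : Type*) [Finite V] (d : ℕ) : V →₀ ℕ :=
  Finsupp.equivFunOnFinite.symm fun _ => d

@[simp]
lemma constExponent_apply {V : Type*} [Finite V] (d : ℕ) (v : V) : constExponent V d v = d := rfl

lemma coeff_constExponent_eq_zero_of_X_pow_dvd {V R : Type*} [Finite V] [CommSemiring R]
    {d : ℕ} {f : MvPolynomial V R} {v : V} (hf : X v ^ (d + 1) ∣ f) :
    coeff (constExponent V d) f = 0 := by
  obtain ⟨g, rfl⟩ := hf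
  rw [X_pow_eq_monomial, coeff_monomial_mul', if_neg]
  exact fun h => absurd (h v) (by simp)

variable {V : Type*} [Fintype V] {d : ℕ}

lemma degree_constExponent : (constExponent V d).degree = Fintype.card V * d := by
  simp [Finsupp.degree_eq_sum]

lemma eq_constExponent_of_degree_le {m : V →₀ ℕ} (hle : ∀ v, d ≤ m v)
    (hdeg : m.degree ≤ Fintype.card V * d) : m = constExponent V d := by
  have hle' : constExponent V d ≤ m := hle
  have hadd : (m - constExponent V d).degree + Fintype.card V * d = m.degree := by
    rw [← degree_constExponent, ← map_add, tsub_add_cancel_of_le hle']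
  have hzero : m - constExponent V d = 0 := (Finsupp.degree_eq_zero_iff _).1 (by lia)
  exact le_antisymm (tsub_eq_zero_iff_le.1 hzero) hle'

lemma sum_eval_eq_neg_one_pow_mul_coeff {K : Type*} [Field K] [Fintype K] [DecidableEq V]
    (hK : Fintype.card K = d + 1) {f : MvPolynomial V K}
    (hf : f.totalDegree ≤ Fintype.card V * d) :
    ∑ x, eval x f = (-1) ^ Fintype.card V * coeff (constExponent V d) f := by
  have hmonomial (m : V →₀ ℕ) :
      ∑ x : V → K, coeff m f * ∏ v, x v ^ m v = coeff m f * ∏ v, ∑ a : K, a ^ m v := by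
    rw [← mul_sum, Fintype.prod_sum]
  simp only [eval_eq']
  rw [sum_comm]
  simp only [hmonomial]
  rw [sum_eq_single (constExponent V d)]
  · simp [sum_pow_eq_neg_one hK, mul_comm]
  · intro m hm hne
    obtain ⟨v, hv⟩ : ∃ v, m v < d := by
      contrapose! hne
      exact eq_constExponent_of_degree_le hne ((le_totalDegree hm).trans hf)
    rw [prod_eq_zero (mem_univ v) (sum_pow_eq_zero_of_lt hK hv), mul_zero]
  · intro h
    rw [notMem_support_iff.1 h, zero_mul]

end ConstExponent

section InvariantAlong

/-- `f` is constant, as a function, on every line of direction `w`. -/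
def InvariantAlong {V R : Type*} [CommSemiring R] (w : V → R) (f : MvPolynomial V R) : Prop :=
  ∀ (x : V → R) (a : R), eval (x + a • w) f = eval x f

namespace InvariantAlong

variable {V R : Type*}

lemma mul [CommSemiring R] {w : V → R} {f g : MvPolynomial V R} (hf : InvariantAlong w f)
    (hg : InvariantAlong w g) : InvariantAlong w (f * g) := fun x a => by
  rw [map_mul, map_mul, hf, hg]

lemma prod [CommSemiring R] {w : V → R} {ι : Type*} {s : Finset ι} {f : ι → MvPolynomial V R}
    (hf : ∀ i ∈ s, InvariantAlong w (f i)) : InvariantAlong w (∏ i ∈ s, f i) := fun x a => by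
  rw [map_prod, map_prod]
  exact prod_congr rfl fun i hi => hf i hi x a

lemma X_sub_X [CommRing R] {w : V → R} {u v : V} (h : w u = w v) :
    InvariantAlong w (X u - X v) := fun x a => by
  simp [h]

lemma X_pow [CommSemiring R] {w : V → R} {v : V} (h : w v = 0) (k : ℕ) :
    InvariantAlong w (X v ^ k) := fun x a => by
  simp [h]

end InvariantAlong

variable {V K : Type*} [Field K] [Fintype K] {d : ℕ}

lemma sum_eval_monomial_translate_eq_neg_one (hK : Fintype.card K = d + 1) {w : V → K}
    {r : V →₀ ℕ} (hr : r.degree = d) (hw : ∀ v ∈ r.support, w v = 1) (x : V → K) :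
    ∑ a : K, eval (x + a • w) (monomial r 1) = -1 := by
  have hmonic : ∀ v ∈ r.support, ((Polynomial.X + Polynomial.C (x v)) ^ r v).Monic :=
    fun v _ => (Polynomial.monic_X_add_C _).pow _
  rw [← sum_eval_eq_neg_one_of_monic hK (Polynomial.monic_prod_of_monic _ _ hmonic)
    (by simp [Polynomial.natDegree_prod_of_monic _ _ hmonic, ← hr, Finsupp.degree_apply])]
  refine sum_congr rfl fun a _ => ?_
  simp only [eval_monomial, one_mul, Finsupp.prod, Polynomial.eval_prod, Polynomial.eval_pow,
    Polynomial.eval_add, Polynomial.eval_X, Polynomial.eval_C, Pi.add_apply, Pi.smul_apply]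
  refine prod_congr rfl fun v hv => ?_
  rw [hw v hv, smul_eq_mul, mul_one, add_comm]

variable [Fintype V]

lemma sum_mul_eq_of_sum_translate_eq [DecidableEq V] [DecidableEq K] {w : V → K} {v : V}
    (hv : w v = 1) {g h : (V → K) → K} (hh : ∀ x (a : K), h (x + a • w) = h x) {c : K}
    (hg : ∀ x, ∑ a : K, g (x + a • w) = c) :
    ∑ x, g x * h x = c * ∑ x with x v = 0, h x := by
  calc ∑ x, g x * h x
      = ∑ a, ∑ x, if x v = a then g x * h x else 0 := by
        rw [sum_comm]
        simp
    _ = ∑ a, ∑ x, if x v = 0 then g (x + a • w) * h x else 0 := by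
        refine sum_congr rfl fun a _ => ?_
        rw [← Equiv.sum_comp (Equiv.addRight (a • w))]
        simp [hv, hh]
    _ = c * ∑ x with x v = 0, h x := by
        rw [sum_comm, mul_sum, sum_filter]
        refine sum_congr rfl fun x _ => ?_
        split_ifs
        · rw [← sum_mul, hg]
        · simp

lemma coeff_monomial_mul_eq_of_invariantAlong (hK : Fintype.card K = d + 1) {w : V → K}
    {f : MvPolynomial V K} (hf : InvariantAlong w f)
    (hdeg : d + f.totalDegree ≤ Fintype.card V * d) {r s : V →₀ ℕ} (hr : r.degree = d)
    (hs : s.degree = d) (hwr : ∀ v ∈ r.support, w v = 1) (hws : ∀ v ∈ s.support, w v = 1) :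
    coeff (constExponent V d) (monomial r 1 * f) =
      coeff (constExponent V d) (monomial s 1 * f) := by
  classical
  obtain ⟨v, hv⟩ : r.support.Nonempty := by
    rw [Finsupp.support_nonempty_iff, ne_eq, ← Finsupp.degree_eq_zero_iff, hr]
    exact (pos_of_card_eq_succ hK).ne'
  have hcoeff {t : V →₀ ℕ} (ht : t.degree = d) (hwt : ∀ v ∈ t.support, w v = 1) :
      (-1) ^ Fintype.card V * coeff (constExponent V d) (monomial t 1 * f) =
        -1 * ∑ x with x v = 0, eval x f := by
    have hle : (monomial t 1 * f).totalDegree ≤ Fintype.card V * d := by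
      refine ((totalDegree_mul _ _).trans ?_).trans hdeg
      rw [totalDegree_monomial _ one_ne_zero, ← ht]
      rfl
    rw [← sum_eval_eq_neg_one_pow_mul_coeff hK hle]
    simp only [map_mul]
    exact sum_mul_eq_of_sum_translate_eq (h := fun x => eval x f) (hwr v hv) hf
      (sum_eval_monomial_translate_eq_neg_one hK ht hwt)
  exact mul_left_cancel₀ (by simp) ((hcoeff hr hwr).trans (hcoeff hs hws).symm)

end InvariantAlong

section Vandermonde

variable {R : Type*} [CommRing R] {d : ℕ}

lemma sum_sign_mul_prod_pow (v : Fin d → R) :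
    ∑ σ : Equiv.Perm (Fin d), ((sign σ : ℤ) : R) * ∏ i, v i ^ (σ i : ℕ) =
      ∏ i, ∏ j ∈ Iio i, (v i - v j) := by
  rw [prod_comm' (t' := univ) (s' := fun j => Ioi j) (by simp), ← Matrix.det_vandermonde,
    ← Matrix.det_transpose, Matrix.det_apply']
  rfl

lemma sum_sign_mul_prod_pow_rev (v : Fin d → R) :
    ∑ σ : Equiv.Perm (Fin d), ((sign σ : ℤ) : R) * ∏ i, v i ^ ((σ i).rev : ℕ) =
      ∏ i, ∏ j ∈ Ioi i, (v i - v j) := by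
  have hdet := Matrix.det_projVandermonde (fun _ => 1) v
  rw [← Matrix.det_transpose, Matrix.det_apply'] at hdet
  simpa only [Matrix.transpose_apply, Matrix.projVandermonde_apply, one_pow, one_mul] using hdet

end Vandermonde

section PermExponent

/-- The exponent of the monomial `∏_{i ≤ d} x_i ^ σ(i) * ∏_{i > d} x_i ^ d`; as in the theorem,
`σ(i)` is `(σ i : ℕ) + 1`. -/
noncomputable def permExponent (n : ℕ) {d : ℕ} (σ : Equiv.Perm (Fin d)) : Fin n →₀ ℕ :=
  Finsupp.equivFunOnFinite.symm fun i =>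
    if h : (i : ℕ) < d then (σ ⟨(i : ℕ), h⟩ : ℕ) + 1 else d

/-- The alternating polynomial `∏_{i < j ≤ d} (x_i - x_j)`, given by its expansion. Each of its
monomials is complementary, with respect to `∏ x_i ^ d`, to one of the monomials
`permExponent n σ`, so that multiplying by it and taking one coefficient performs the signed sum
over `σ`. -/
noncomputable def complementaryAlternant (n d : ℕ) (R : Type*) [CommRing R] :
    MvPolynomial (Fin n) R :=
  ∑ σ : Equiv.Perm (Fin d), monomial (constExponent (Fin n) d - permExponent n σ) ((sign σ : ℤ) : R)

variable {d m n : ℕ} {R : Type*} [CommRing R]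

@[simp]
lemma permExponent_castAdd (σ : Equiv.Perm (Fin d)) (i : Fin d) :
    permExponent (d + m) σ (Fin.castAdd m i) = σ i + 1 := by
  simp [permExponent]

@[simp]
lemma permExponent_natAdd (σ : Equiv.Perm (Fin d)) (i : Fin m) :
    permExponent (d + m) σ (Fin.natAdd d i) = d := by
  simp [permExponent]

lemma permExponent_le (σ : Equiv.Perm (Fin d)) : permExponent n σ ≤ constExponent (Fin n) d := by
  intro i
  simp only [permExponent, constExponent, Finsupp.equivFunOnFinite_symm_apply_apply]
  split_ifs
  · exact (σ _).isLt
  · rfl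

lemma permExponent_injective :
    Function.Injective (permExponent (d + m) : Equiv.Perm (Fin d) → Fin (d + m) →₀ ℕ) := by
  intro σ τ h
  ext i
  simpa using DFunLike.congr_fun h (Fin.castAdd m i)

lemma degree_permExponent (σ : Equiv.Perm (Fin d)) :
    (permExponent (d + m) σ).degree = d + ∑ j : Fin (d + m), min (j : ℕ) d := by
  have hmin (i : Fin d) : min (i : ℕ) d = i := min_eq_left i.isLt.le
  simp only [Finsupp.degree_eq_sum, Fin.sum_univ_add, permExponent_castAdd, permExponent_natAdd,
    sum_add_distrib, Fin.val_castAdd, Fin.val_natAdd, hmin]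
  rw [Equiv.sum_comp σ (fun i : Fin d => (i : ℕ))]
  simp only [sum_const, card_univ, Fintype.card_fin, smul_eq_mul, mul_one, le_add_iff_nonneg_right,
    zero_le, inf_of_le_right]
  ring

lemma monomial_eq_prod_castAdd_mul_prod_natAdd (e : Fin (d + m) →₀ ℕ) (c : R) :
    monomial e c = C c * ((∏ i : Fin d, X (Fin.castAdd m i) ^ e (Fin.castAdd m i)) *
      ∏ i : Fin m, X (Fin.natAdd d i) ^ e (Fin.natAdd d i)) := by
  rw [monomial_eq, Finsupp.prod_fintype _ _ (by simp), Fin.prod_univ_add]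

lemma complementaryAlternant_eq_prod : complementaryAlternant (d + m) d R =
    ∏ i : Fin d, ∏ j ∈ Ioi i, (X (Fin.castAdd m i) - X (Fin.castAdd m j)) := by
  rw [← sum_sign_mul_prod_pow_rev, complementaryAlternant]
  refine sum_congr rfl fun σ _ => ?_
  simp [monomial_eq_prod_castAdd_mul_prod_natAdd]

lemma totalDegree_complementaryAlternant_add_le :
    (complementaryAlternant (d + m) d R).totalDegree + (d + ∑ j : Fin (d + m), min (j : ℕ) d) ≤
      (d + m) * d := by
  have hmonomial (σ : Equiv.Perm (Fin d)) :
      (constExponent (Fin (d + m)) d - permExponent (d + m) σ).degree +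
        (d + ∑ j : Fin (d + m), min (j : ℕ) d) = (d + m) * d := by
    rw [← degree_permExponent σ, ← map_add, tsub_add_cancel_of_le (permExponent_le σ),
      degree_constExponent, Fintype.card_fin]
  rw [← hmonomial 1]
  refine Nat.add_le_add_right (totalDegree_finsetSum_le fun σ _ => ?_) _
  refine (totalDegree_monomial_le _ _).trans ?_
  have hσ := hmonomial σ
  have hone := hmonomial 1
  change Finsupp.degree _ ≤ _
  lia

lemma coeff_monomial_mul_mul_complementary (σ : Equiv.Perm (Fin d)) (r : Fin n →₀ ℕ)
    (f : MvPolynomial (Fin n) R) (c : R) :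
    coeff (constExponent (Fin n) d)
        (monomial r 1 * (f * monomial (constExponent (Fin n) d - permExponent n σ) c)) =
      c * if r ≤ permExponent n σ then coeff (permExponent n σ - r) f else 0 := by
  rw [← mul_assoc]
  nth_rw 1 [← add_tsub_cancel_of_le (permExponent_le σ)]
  rw [coeff_mul_monomial, coeff_monomial_mul']
  simp [mul_comm]

lemma coeff_mul_complementaryAlternant (τ : Equiv.Perm (Fin d)) :
    coeff (constExponent (Fin (d + m)) d)
      (monomial (permExponent (d + m) τ) 1 * complementaryAlternant (d + m) d R) =
        ((sign τ : ℤ) : R) := by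
  have hmatch (σ : Equiv.Perm (Fin d)) :
      permExponent (d + m) τ + (constExponent (Fin (d + m)) d - permExponent (d + m) σ) =
        constExponent (Fin (d + m)) d ↔ σ = τ := by
    rw [← (permExponent_injective (m := m)).eq_iff]
    nth_rw 2 [← add_tsub_cancel_of_le (permExponent_le σ)]
    rw [add_left_inj, eq_comm]
  simp [complementaryAlternant, mul_sum, monomial_mul, coeff_sum, coeff_monomial, hmatch]

end PermExponent

section GraphPolynomial

/-- The neighbours of `j` that precede it. -/
def backNeighbors {V : Type*} [Fintype V] [LinearOrder V] (G : SimpleGraph V) [DecidableRel G.Adj]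
    (j : V) : Finset V :=
  {i | i < j ∧ G.Adj i j}

/-- The graph polynomial of `G` over `R`, the product of `x_j - x_i` over the edges `i < j`. -/
noncomputable def graphPolynomial {V : Type*} [Fintype V] [LinearOrder V] (R : Type*) [CommRing R]
    (G : SimpleGraph V) [DecidableRel G.Adj] : MvPolynomial V R :=
  ∏ e : V × V with e.1 < e.2 ∧ G.Adj e.1 e.2, (X e.2 - X e.1)

/-- The graph polynomial of the first `k` vertices, times `x_j ^ d` for each remaining vertex `j`.
These factors pad it to the full set of variables, so that the induction on `k` takes place in one
polynomial ring and reads off the coefficient of one and the same monomial `∏ x_i ^ d`. -/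
noncomputable def truncatedGraphPolynomial {n : ℕ} (R : Type*) [CommRing R]
    (G : SimpleGraph (Fin n)) [DecidableRel G.Adj] (d k : ℕ) : MvPolynomial (Fin n) R :=
  ∏ j : Fin n, if (j : ℕ) < k then ∏ i ∈ backNeighbors G j, (X j - X i) else X j ^ d

lemma graphPolynomial_eq_prod_backNeighbors {V : Type*} [Fintype V] [LinearOrder V] {R : Type*}
    [CommRing R] (G : SimpleGraph V) [DecidableRel G.Adj] :
    graphPolynomial R G = ∏ j, ∏ i ∈ backNeighbors G j, (X j - X i) := by
  simp only [graphPolynomial, backNeighbors, prod_filter, Fintype.prod_prod_type_right]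

lemma map_graphPolynomial {V : Type*} [Fintype V] [LinearOrder V] {R S : Type*} [CommRing R]
    [CommRing S] (g : R →+* S) (G : SimpleGraph V) [DecidableRel G.Adj] :
    map g (graphPolynomial R G) = graphPolynomial S G := by
  simp [graphPolynomial]

variable {n d k : ℕ} {R : Type*} [CommRing R] (G : SimpleGraph (Fin n)) [DecidableRel G.Adj]

lemma truncatedGraphPolynomial_self : truncatedGraphPolynomial R G d n = graphPolynomial R G := by
  simp [truncatedGraphPolynomial, graphPolynomial_eq_prod_backNeighbors]

lemma card_backNeighbors_le (j : Fin n) : #(backNeighbors G j) ≤ j := by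
  have hsub : backNeighbors G j ⊆ Iio j := fun i hi => by simp_all [backNeighbors]
  simpa using card_le_card hsub

variable {G} in
lemma backNeighbors_eq_Iio {j : Fin n} (h : ∀ i < j, G.Adj i j) : backNeighbors G j = Iio j := by
  ext i
  simpa [backNeighbors] using h i

lemma totalDegree_truncatedGraphPolynomial_le [Nontrivial R]
    (hback : ∀ j : Fin n, #(backNeighbors G j) ≤ d) (hk : d ≤ k) :
    (truncatedGraphPolynomial R G d k).totalDegree ≤ ∑ j : Fin n, min (j : ℕ) d := by
  refine (totalDegree_finsetProd _ _).trans (sum_le_sum fun j _ => ?_)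
  split_ifs with hj
  · calc (∏ i ∈ backNeighbors G j, (X j - X i : MvPolynomial (Fin n) R)).totalDegree
        ≤ ∑ i ∈ backNeighbors G j, (X j - X i : MvPolynomial (Fin n) R).totalDegree :=
          totalDegree_finsetProd _ _
      _ ≤ ∑ i ∈ backNeighbors G j, 1 :=
          sum_le_sum fun i _ => (totalDegree_sub _ _).trans (by simp)
      _ = #(backNeighbors G j) := by simp
      _ ≤ min (j : ℕ) d := le_min (card_backNeighbors_le G j) (hback j)
  · rw [totalDegree_X_pow]
    exact le_min (by lia) le_rfl

lemma invariantAlong_truncatedGraphPolynomial :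
    InvariantAlong (fun i : Fin n => if (i : ℕ) < k then 1 else 0)
      (truncatedGraphPolynomial R G d k) := by
  refine InvariantAlong.prod fun j _ => ?_
  split_ifs with hj
  · refine InvariantAlong.prod fun i hi => InvariantAlong.X_sub_X ?_
    have hij : (i : ℕ) < j := (mem_filter.1 hi).2.1
    rw [if_pos hj, if_pos (hij.trans hj)]
  · exact InvariantAlong.X_pow (by simp [hj]) d

lemma invariantAlong_complementaryAlternant {m : ℕ} (hk : d ≤ k) :
    InvariantAlong (fun i : Fin (d + m) => if (i : ℕ) < k then 1 else 0)
      (complementaryAlternant (d + m) d R) := by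
  have hlt (i : Fin d) : (i : ℕ) < k := i.isLt.trans_le hk
  rw [complementaryAlternant_eq_prod]
  exact InvariantAlong.prod fun i _ => InvariantAlong.prod fun j _ =>
    InvariantAlong.X_sub_X (by simp [hlt])

end GraphPolynomial

section Recursion

lemma monomial_indicator_one {V R : Type*} [CommSemiring R] (s : Finset V) :
    monomial (Finsupp.indicator s fun _ _ => 1) (1 : R) = ∏ v ∈ s, X v := by
  simp [← prod_X_pow]

lemma degree_indicator_one {V : Type*} (s : Finset V) :
    (Finsupp.indicator s fun _ _ => 1).degree = #s := by
  classical
  rw [Finsupp.degree_apply, sum_subset (Finsupp.support_indicator_subset s _)]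
  · simp [Finsupp.indicator_apply]
  · simp

lemma X_dvd_prod_sub_sub_neg_one_pow_mul_prod {V R : Type*} [CommRing R] (v : V) (s : Finset V) :
    (X v : MvPolynomial V R) ∣ ∏ i ∈ s, (X v - X i) - (-1) ^ #s * ∏ i ∈ s, X i := by
  have h := Polynomial.sub_dvd_eval_sub (X v : MvPolynomial V R) 0
    (∏ i ∈ s, (Polynomial.X - Polynomial.C (X i)))
  simpa [Polynomial.eval_prod, prod_neg] using h

variable {d k m : ℕ} {R : Type*} [CommRing R] (G : SimpleGraph (Fin (d + m))) [DecidableRel G.Adj]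

lemma coeff_X_pow_mul_truncatedGraphPolynomial_succ {n : ℕ} (G : SimpleGraph (Fin n))
    [DecidableRel G.Adj] (v : Fin n) (f : MvPolynomial (Fin n) R) :
    coeff (constExponent (Fin n) d) (X v ^ d * (truncatedGraphPolynomial R G d (v + 1) * f)) =
      (-1) ^ #(backNeighbors G v) * coeff (constExponent (Fin n) d)
        ((∏ i ∈ backNeighbors G v, X i) * (truncatedGraphPolynomial R G d v * f)) := by
  let A : MvPolynomial (Fin n) R := ∏ j ∈ univ.erase v,
    if (j : ℕ) < v then ∏ i ∈ backNeighbors G j, (X j - X i) else X j ^ d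
  have hv : truncatedGraphPolynomial R G d v = X v ^ d * A := by
    rw [truncatedGraphPolynomial, ← mul_prod_erase _ _ (mem_univ v), if_neg (lt_irrefl _)]
  have hsucc : truncatedGraphPolynomial R G d (v + 1) =
      (∏ i ∈ backNeighbors G v, (X v - X i)) * A := by
    rw [truncatedGraphPolynomial, ← mul_prod_erase _ _ (mem_univ v), if_pos (Nat.lt_succ_self _)]
    refine congrArg _ (prod_congr rfl fun j hj => if_congr ?_ rfl rfl)
    have hne : (j : ℕ) ≠ v := Fin.val_ne_of_ne (ne_of_mem_erase hj)
    lia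
  obtain ⟨g, hg⟩ := X_dvd_prod_sub_sub_neg_one_pow_mul_prod (R := R) v (backNeighbors G v)
  have hdvd : X v ^ (d + 1) ∣ X v ^ d * (truncatedGraphPolynomial R G d (v + 1) * f) -
      C ((-1) ^ #(backNeighbors G v)) *
        ((∏ i ∈ backNeighbors G v, X i) * (truncatedGraphPolynomial R G d v * f)) :=
    ⟨g * A * f, by
      rw [hv, hsucc, map_pow, map_neg, map_one]
      linear_combination X v ^ d * A * f * hg⟩
  rw [← coeff_C_mul, ← sub_eq_zero, ← coeff_sub]
  exact coeff_constExponent_eq_zero_of_X_pow_dvd hdvd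

lemma prod_X_mul_truncatedGraphPolynomial
    (hclique : ∀ j : Fin (d + m), (j : ℕ) < d → backNeighbors G j = Iio j) :
    (∏ i : Fin d, X (Fin.castAdd m i)) * truncatedGraphPolynomial R G d d =
      ∑ σ : Equiv.Perm (Fin d), monomial (permExponent (d + m) σ) ((sign σ : ℤ) : R) := by
  have hiio (i : Fin d) : backNeighbors G (Fin.castAdd m i) = Iio (Fin.castAdd m i) :=
    hclique _ i.isLt
  simp only [truncatedGraphPolynomial, Fin.prod_univ_add, Fin.val_castAdd, Fin.is_lt, if_true,
    Fin.val_natAdd, Nat.not_lt.2 (Nat.le_add_right _ _), if_false, hiio, Fin.prod_Iio_castAdd,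
    ← sum_sign_mul_prod_pow, monomial_eq_prod_castAdd_mul_prod_natAdd, permExponent_castAdd,
    permExponent_natAdd, pow_succ, prod_mul_distrib, map_intCast, sum_mul, mul_sum]
  exact sum_congr rfl fun σ _ => by ring

lemma coeff_prod_X_mul_truncatedGraphPolynomial
    (hclique : ∀ j : Fin (d + m), (j : ℕ) < d → backNeighbors G j = Iio j) :
    coeff (constExponent (Fin (d + m)) d) ((∏ i : Fin d, X (Fin.castAdd m i)) *
      (truncatedGraphPolynomial R G d d * complementaryAlternant (d + m) d R)) = (d ! : R) := by
  have hsign (σ : Equiv.Perm (Fin d)) : ((sign σ : ℤ) : R) * ((sign σ : ℤ) : R) = 1 := by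
    rw [← Int.cast_mul, ← Units.val_mul, Int.units_mul_self, Units.val_one, Int.cast_one]
  have hterm (σ : Equiv.Perm (Fin d)) : monomial (permExponent (d + m) σ) ((sign σ : ℤ) : R) =
      C ((sign σ : ℤ) : R) * monomial (permExponent (d + m) σ) 1 := by
    rw [C_mul_monomial, mul_one]
  rw [← mul_assoc, prod_X_mul_truncatedGraphPolynomial G hclique, sum_mul, coeff_sum]
  simp only [hterm, mul_assoc, coeff_C_mul, coeff_mul_complementaryAlternant, hsign]
  simp [Fintype.card_perm]

variable {K : Type*} [Field K] [Fintype K]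

lemma coeff_monomial_mul_truncatedGraphPolynomial_eq (hK : Fintype.card K = d + 1)
    (hback : ∀ j : Fin (d + m), #(backNeighbors G j) ≤ d) (hk : d ≤ k) {r s : Fin (d + m) →₀ ℕ}
    (hr : r.degree = d) (hs : s.degree = d) (hrk : ∀ i ∈ r.support, (i : ℕ) < k)
    (hsk : ∀ i ∈ s.support, (i : ℕ) < k) :
    coeff (constExponent (Fin (d + m)) d) (monomial r 1 *
        (truncatedGraphPolynomial K G d k * complementaryAlternant (d + m) d K)) =
      coeff (constExponent (Fin (d + m)) d) (monomial s 1 *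
        (truncatedGraphPolynomial K G d k * complementaryAlternant (d + m) d K)) := by
  have hdeg : d + (truncatedGraphPolynomial K G d k *
      complementaryAlternant (d + m) d K).totalDegree ≤ Fintype.card (Fin (d + m)) * d := by
    have hmul := totalDegree_mul (truncatedGraphPolynomial K G d k)
      (complementaryAlternant (d + m) d K)
    have htrunc := totalDegree_truncatedGraphPolynomial_le (R := K) G hback hk
    have halt := totalDegree_complementaryAlternant_add_le (d := d) (m := m) (R := K)
    rw [Fintype.card_fin]
    lia
  exact coeff_monomial_mul_eq_of_invariantAlong hK
    ((invariantAlong_truncatedGraphPolynomial G).mul (invariantAlong_complementaryAlternant hk))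
    hdeg hr hs (fun i hi => if_pos (hrk i hi)) fun i hi => if_pos (hsk i hi)

theorem coeff_monomial_mul_truncatedGraphPolynomial (hK : Fintype.card K = d + 1)
    (hclique : ∀ j : Fin (d + m), (j : ℕ) < d → backNeighbors G j = Iio j)
    (hback : ∀ j : Fin (d + m), d ≤ (j : ℕ) → #(backNeighbors G j) = d) (hdk : d ≤ k)
    (hkn : k ≤ d + m) {r : Fin (d + m) →₀ ℕ} (hr : r.degree = d)
    (hrk : ∀ i ∈ r.support, (i : ℕ) < k) :
    coeff (constExponent (Fin (d + m)) d) (monomial r 1 *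
      (truncatedGraphPolynomial K G d k * complementaryAlternant (d + m) d K)) = (d ! : K) := by
  have hle (j : Fin (d + m)) : #(backNeighbors G j) ≤ d := by
    rcases lt_or_ge (j : ℕ) d with hj | hj
    · exact (card_backNeighbors_le G j).trans hj.le
    · exact (hback j hj).le
  induction k, hdk using Nat.le_induction generalizing r with
  | base =>
    let s : Finset (Fin (d + m)) := univ.map (Fin.castAddEmb m)
    have hs : ∀ i ∈ (Finsupp.indicator s fun _ _ => 1).support, (i : ℕ) < d := fun i hi => by
      obtain ⟨j, -, rfl⟩ := mem_map.1 (Finsupp.support_indicator_subset s _ hi)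
      exact j.isLt
    rw [coeff_monomial_mul_truncatedGraphPolynomial_eq G hK hle le_rfl hr
      ((degree_indicator_one s).trans (by simp [s])) hrk hs, monomial_indicator_one, prod_map]
    exact coeff_prod_X_mul_truncatedGraphPolynomial G hclique
  | succ k hdk ih =>
    let v : Fin (d + m) := ⟨k, hkn⟩
    have hneg : (-1 : K) ^ d = 1 := pow_eq_one_of_card_eq_succ hK (by simp)
    have hcard : #(backNeighbors G v) = d := hback v hdk
    have hsingle : ∀ i ∈ (Finsupp.single v d).support, (i : ℕ) < k + 1 := fun i hi => by
      rw [mem_singleton.1 (Finsupp.support_single_subset hi)]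
      exact Nat.lt_succ_self k
    rw [coeff_monomial_mul_truncatedGraphPolynomial_eq G hK hle (hdk.trans k.le_succ) hr
      (Finsupp.degree_single v d) hrk hsingle, ← X_pow_eq_monomial,
      coeff_X_pow_mul_truncatedGraphPolynomial_succ G v, hcard, hneg, one_mul,
      ← monomial_indicator_one]
    refine ih (Nat.le_of_succ_le hkn) ((degree_indicator_one _).trans hcard) fun i hi => ?_
    exact (mem_filter.1 (Finsupp.support_indicator_subset _ _ hi)).2.1

end Recursion

/-- The coefficient `c_G(h, σ)` of the theorem, taken over an arbitrary ring of coefficients. -/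
noncomputable def permCoeff {n d : ℕ} (R : Type*) [CommRing R] (G : SimpleGraph (Fin n))
    [DecidableRel G.Adj] (r : Fin n → ℕ) (σ : Equiv.Perm (Fin d)) : R :=
  if ∀ i, r i ≤ permExponent n σ i then
    coeff (Finsupp.equivFunOnFinite.symm fun i => permExponent n σ i - r i) (graphPolynomial R G)
  else 0

lemma map_permCoeff {n d : ℕ} {R S : Type*} [CommRing R] [CommRing S] (g : R →+* S)
    (G : SimpleGraph (Fin n)) [DecidableRel G.Adj] (r : Fin n → ℕ) (σ : Equiv.Perm (Fin d)) :
    g (permCoeff R G r σ) = permCoeff S G r σ := by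
  simp only [permCoeff, apply_ite g, map_zero, ← coeff_map, map_graphPolynomial]

lemma sum_sign_mul_permCoeff {n d : ℕ} {R : Type*} [CommRing R] (G : SimpleGraph (Fin n))
    [DecidableRel G.Adj] (r : Fin n →₀ ℕ) :
    ∑ σ : Equiv.Perm (Fin d), ((sign σ : ℤ) : R) * permCoeff R G r σ =
      coeff (constExponent (Fin n) d)
        (monomial r 1 * (graphPolynomial R G * complementaryAlternant n d R)) := by
  simp only [complementaryAlternant, mul_sum, coeff_sum, coeff_monomial_mul_mul_complementary]
  refine sum_congr rfl fun σ _ => congrArg _ (if_congr Iff.rfl (congrArg (coeff · _) ?_) rfl)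
  ext i
  simp

theorem stmt18_general {d n : ℕ} (hn : d ≤ n) {K : Type*} [Field K] [Fintype K]
    (hK : Fintype.card K = d + 1) (G : SimpleGraph (Fin n)) [DecidableRel G.Adj]
    (hclique : ∀ i j : Fin n, (i : ℕ) < d → (j : ℕ) < d → i ≠ j → G.Adj i j)
    (hback : ∀ j : Fin n, d ≤ (j : ℕ) → #(backNeighbors G j) = d)
    (r : Fin n → ℕ) (hr : ∑ i, r i = d) :
    ((∑ σ : Equiv.Perm (Fin d), (sign σ : ℤ) * permCoeff ℤ G r σ : ℤ) : K) = (d ! : K) := by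
  obtain ⟨m, rfl⟩ := Nat.exists_eq_add_of_le hn
  have hIio (j : Fin (d + m)) (hj : (j : ℕ) < d) : backNeighbors G j = Iio j :=
    backNeighbors_eq_Iio fun i hij => hclique i j ((Fin.lt_def.1 hij).trans hj) hj hij.ne
  have hdeg : (Finsupp.equivFunOnFinite.symm r).degree = d := (Finsupp.degree_eq_sum _).trans hr
  have hcast (σ : Equiv.Perm (Fin d)) :
      ((permCoeff ℤ G r σ : ℤ) : K) = permCoeff K G (Finsupp.equivFunOnFinite.symm r) σ :=
    map_permCoeff (Int.castRingHom K) G r σ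
  simp only [Int.cast_sum, Int.cast_mul, hcast]
  rw [sum_sign_mul_permCoeff, ← truncatedGraphPolynomial_self (d := d)]
  exact coeff_monomial_mul_truncatedGraphPolynomial G hK hIio hback hn le_rfl hdeg
    fun i _ => i.isLt

open MvPolynomial in
/-- For a permutation `σ` of `{1,…,d}` (encoded as `σ : Equiv.Perm (Fin d)`, where
index `i` gets value `(σ i : ℕ) + 1 ∈ {1,…,d}`), the exponent of `x_i` in the monomial
is `σ(i) - r(i)` for `i ≤ d` and `d - r(i)` for `i > d`; the coefficient is interpreted
as `0` when some exponent is negative. -/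
theorem stmt18 (d n : ℕ) (hd : 2 ≤ d) (hp : Nat.Prime (d + 1)) (hn : d ≤ n)
    (G : SimpleGraph (Fin n)) [DecidableRel G.Adj]
    (hclique : ∀ i j : Fin n, (i : ℕ) < d → (j : ℕ) < d → i ≠ j → G.Adj i j)
    (hback : ∀ i : Fin n, d ≤ (i : ℕ) →
      (Finset.univ.filter fun j => j < i ∧ G.Adj j i).card = d)
    (r : Fin n → ℕ) (hr : ∑ i, r i = d) :
    (∑ σ : Equiv.Perm (Fin d), (Equiv.Perm.sign σ : ℤ) *
      (if ∀ i : Fin n,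
            r i ≤ (if h : (i : ℕ) < d then (σ ⟨(i : ℕ), h⟩ : ℕ) + 1 else d) then
        MvPolynomial.coeff
          (Finsupp.equivFunOnFinite.symm fun i : Fin n =>
            (if h : (i : ℕ) < d then (σ ⟨(i : ℕ), h⟩ : ℕ) + 1 else d) - r i)
          (∏ e ∈ Finset.univ.filter
              fun p : Fin n × Fin n => p.1 < p.2 ∧ G.Adj p.1 p.2,
            (MvPolynomial.X e.2 - MvPolynomial.X e.1 : MvPolynomial (Fin n) ℤ))
      else 0))
      ≡ -1 [ZMOD ((d : ℤ) + 1)] := by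
  have : Fact (Nat.Prime (d + 1)) := ⟨hp⟩
  exact_mod_cast (ZMod.intCast_eq_intCast_iff _ (-1) (d + 1)).1 <|
    (stmt18_general hn (ZMod.card (d + 1)) G hclique hback r hr).trans
      ((ZMod.wilsons_lemma (d + 1)).trans (by simp))
end
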